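/- arXiv:2307.08402 — 3 statements merged into one kernel-verified Lean document; each statement's English description precedes it below -/
import Mathlib

section
/- Let p ∈ [1,∞) and let μ, ν be probability measures on ℝ with finite p-th moments, with distribution functions F and G respectively. Then W_p(μ,ν)^p = ∫₀¹ |F⁻¹(u) − G⁻¹(u)|^p du, where F⁻¹ and G⁻¹ are the generalized inverses of F and G. -/
/-!
Let `M` be a measure on the plane and let moving mass from `x` to `y` cost `M ([x, ∞) × (-∞, y))`.
By Tonelli, a coupling `π` then costs `∫ π {x ≤ s, t < y} dM(s, t)`, and `π {x ≤ s, t < y}` is at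
least `(F s - G t)⁺`. The law of `(F⁻¹ U, G⁻¹ U)` with `U` uniform on `(0, 1)` attains this bound
for all `s` and `t` at once because `F⁻¹ u ≤ x ↔ u ≤ F x`, so it is optimal for every such cost.

If `ψ` is convex, increasing and vanishes at `-∞`, then `ψ (y - x)` is a cost of this form:
`ψ h = ∫_{-∞}^h m (-∞, a) da`, where `m` is the Stieltjes measure of the right derivative of `ψ`,
and `M` is the image of `ds ⊗ m(dr)` under `(s, r) ↦ (s, s + r)`. A nonnegative convex function,
such as `|t| ^ p`, splits at a minimizer (or at infinity) as `c + ψ₁ t + ψ₂ (-t)` with `ψ₁` and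
`ψ₂` of this kind, and exchanging the marginals takes care of one of the two directions.
-/

open MeasureTheory ENNReal Set

/-- Generalized inverse (quantile function) of a distribution function `F`:
`F⁻¹(u) = inf {x : F x ≥ u}`. -/
noncomputable def qinv (F : ℝ → ℝ) (u : ℝ) : ℝ := sInf {x : ℝ | u ≤ F x}

/-- `π` is a coupling of `μ` and `ν`. -/
def IsCoupling {α : Type*} [MeasurableSpace α] (π : MeasureTheory.Measure (α × α))
    (μ ν : MeasureTheory.Measure α) : Prop :=
  π.map Prod.fst = μ ∧ π.map Prod.snd = ν

/-- The `p`-th power of the `p`-Wasserstein distance on `ℝ`: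
`W_p(μ,ν)^p = inf over couplings π of ∫ |x-y|^p dπ`. -/
noncomputable def WpPow (p : ℝ) (μ ν : MeasureTheory.Measure ℝ) : ℝ≥0∞ :=
  ⨅ π ∈ {π : MeasureTheory.Measure (ℝ × ℝ) | IsCoupling π μ ν},
    ∫⁻ z, ENNReal.ofReal (|z.1 - z.2| ^ p) ∂π

open ProbabilityTheory Filter Topology Function

lemma volume_restrict_Ioo_Ioc {a b c d : ℝ} (hca : c ≤ a) (hbd : b ≤ d) :
    volume.restrict (Ioo c d) (Ioc a b) = ENNReal.ofReal (b - a) := by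
  rw [Measure.restrict_congr_set Ioo_ae_eq_Ioc, Measure.restrict_apply measurableSet_Ioc,
    inter_eq_left.2 (Ioc_subset_Ioc hca hbd), Real.volume_Ioc]

section Quantile

lemma qinv_le_iff (F : StieltjesFunction ℝ) {u : ℝ} (hne : {x | u ≤ F x}.Nonempty)
    (hbdd : BddBelow {x | u ≤ F x}) (x : ℝ) : qinv F u ≤ x ↔ u ≤ F x := by
  refine ⟨fun h => ?_, fun h => csInf_le hbdd h⟩
  have hright : Tendsto F (𝓝[>] x) (𝓝 (F x)) :=
    (F.right_continuous x).mono_left (nhdsWithin_mono _ Ioi_subset_Ici_self)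
  refine ge_of_tendsto hright ?_
  filter_upwards [self_mem_nhdsWithin] with y hy
  obtain ⟨z, hz, hzy⟩ := exists_lt_of_csInf_lt hne (h.trans_lt hy)
  exact le_trans hz (F.mono hzy.le)

variable (μ : Measure ℝ)

lemma qinv_cdf_le_iff {u : ℝ} (hu : u ∈ Ioo (0 : ℝ) 1) (x : ℝ) :
    qinv (cdf μ) u ≤ x ↔ u ≤ cdf μ x := by
  refine qinv_le_iff (cdf μ) ((tendsto_cdf_atTop μ).eventually_const_le hu.2).exists ?_ x
  obtain ⟨b, hb⟩ := ((tendsto_cdf_atBot μ).eventually_lt_const hu.1).exists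
  exact ⟨b, fun y hy => ((cdf μ).mono.reflect_lt (hb.trans_le hy)).le⟩

lemma monotoneOn_qinv_cdf : MonotoneOn (qinv (cdf μ)) (Ioo 0 1) := fun _ hu _ hv huv =>
  (qinv_cdf_le_iff μ hu _).2 (huv.trans ((qinv_cdf_le_iff μ hv _).1 le_rfl))

lemma aemeasurable_qinv_cdf : AEMeasurable (qinv (cdf μ)) (volume.restrict (Ioo 0 1)) :=
  aemeasurable_restrict_of_monotoneOn measurableSet_Ioo (monotoneOn_qinv_cdf μ)

lemma map_qinv_cdf [IsProbabilityMeasure μ] :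
    (volume.restrict (Ioo 0 1)).map (qinv (cdf μ)) = μ := by
  refine Measure.ext_of_Iic _ _ fun x => ?_
  have hpre : qinv (cdf μ) ⁻¹' Iic x =ᵐ[volume.restrict (Ioo 0 1)] Ioc 0 (cdf μ x) := by
    filter_upwards [ae_restrict_mem measurableSet_Ioo] with u hu
    exact propext ((qinv_cdf_le_iff μ hu x).trans ⟨fun h => ⟨hu.1, h⟩, And.right⟩)
  rw [Measure.map_apply_of_aemeasurable (aemeasurable_qinv_cdf μ) measurableSet_Iic,
    measure_congr hpre, volume_restrict_Ioo_Ioc le_rfl (cdf_le_one μ x), sub_zero, ofReal_cdf]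

end Quantile

namespace IsCoupling

variable {α : Type*} [MeasurableSpace α] {π : Measure (α × α)} {μ ν : Measure α}

lemma isProbabilityMeasure [IsProbabilityMeasure μ] (h : IsCoupling π μ ν) :
    IsProbabilityMeasure π := by
  have : IsProbabilityMeasure (π.map Prod.fst) := h.1 ▸ ‹_›
  exact Measure.isProbabilityMeasure_of_map Prod.fst

lemma swap (h : IsCoupling π μ ν) : IsCoupling (π.map Prod.swap) ν μ :=
  ⟨(Measure.map_map measurable_fst measurable_swap).trans h.2,
    (Measure.map_map measurable_snd measurable_swap).trans h.1⟩

lemma measure_sub_le (h : IsCoupling π μ ν) {s t : Set α} (hs : MeasurableSet s)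
    (ht : MeasurableSet t) : μ s - ν t ≤ π (s ×ˢ tᶜ) := by
  rw [tsub_le_iff_right, ← h.1, ← h.2, Measure.map_apply measurable_fst hs,
    Measure.map_apply measurable_snd ht]
  refine (measure_mono fun z hz => ?_).trans (measure_union_le _ _)
  exact (em (z.2 ∈ t)).elim Or.inr fun hzt => Or.inl ⟨hz, hzt⟩

end IsCoupling

section QuantileCoupling

variable (μ ν : Measure ℝ)

/-- The law of `(F⁻¹ U, G⁻¹ U)` for `U` uniform on `(0, 1)`, where `F` and `G` are the
distribution functions of `μ` and `ν`. -/
noncomputable def quantileCoupling : Measure (ℝ × ℝ) :=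
  (volume.restrict (Ioo 0 1)).map fun u => (qinv (cdf μ) u, qinv (cdf ν) u)

lemma aemeasurable_qinv_cdf_prodMk :
    AEMeasurable (fun u => (qinv (cdf μ) u, qinv (cdf ν) u)) (volume.restrict (Ioo 0 1)) :=
  (aemeasurable_qinv_cdf μ).prodMk (aemeasurable_qinv_cdf ν)

lemma map_swap_quantileCoupling :
    (quantileCoupling μ ν).map Prod.swap = quantileCoupling ν μ :=
  AEMeasurable.map_map_of_aemeasurable measurable_swap.aemeasurable
    (aemeasurable_qinv_cdf_prodMk μ ν)

lemma lintegral_quantileCoupling {f : ℝ × ℝ → ℝ≥0∞} (hf : Measurable f) :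
    ∫⁻ z, f z ∂(quantileCoupling μ ν)
      = ∫⁻ u in Ioo 0 1, f (qinv (cdf μ) u, qinv (cdf ν) u) :=
  lintegral_map' hf.aemeasurable (aemeasurable_qinv_cdf_prodMk μ ν)

variable [IsProbabilityMeasure μ] [IsProbabilityMeasure ν]

lemma isCoupling_quantileCoupling : IsCoupling (quantileCoupling μ ν) μ ν := by
  have h := aemeasurable_qinv_cdf_prodMk μ ν
  constructor
  · rw [quantileCoupling, AEMeasurable.map_map_of_aemeasurable measurable_fst.aemeasurable h]
    exact map_qinv_cdf μ
  · rw [quantileCoupling, AEMeasurable.map_map_of_aemeasurable measurable_snd.aemeasurable h]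
    exact map_qinv_cdf ν

lemma quantileCoupling_Iic_prod_Ioi (s t : ℝ) :
    quantileCoupling μ ν (Iic s ×ˢ Ioi t) = μ (Iic s) - ν (Iic t) := by
  have hpre : (fun u => (qinv (cdf μ) u, qinv (cdf ν) u)) ⁻¹' (Iic s ×ˢ Ioi t)
      =ᵐ[volume.restrict (Ioo 0 1)] Ioc (cdf ν t) (cdf μ s) := by
    filter_upwards [ae_restrict_mem measurableSet_Ioo] with u hu
    exact propext ((and_congr (qinv_cdf_le_iff μ hu s)
      (lt_iff_lt_of_le_iff_le (qinv_cdf_le_iff ν hu t))).trans and_comm)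
  rw [quantileCoupling, Measure.map_apply_of_aemeasurable (aemeasurable_qinv_cdf_prodMk μ ν)
    (measurableSet_Iic.prod measurableSet_Ioi), measure_congr hpre,
    volume_restrict_Ioo_Ioc (cdf_nonneg ν t) (cdf_le_one μ s),
    ENNReal.ofReal_sub _ (cdf_nonneg ν t), ofReal_cdf, ofReal_cdf]

end QuantileCoupling

lemma lintegral_measure_Ici_prod_Iio (π M : Measure (ℝ × ℝ)) [SFinite π] [SFinite M] :
    ∫⁻ z, M (Ici z.1 ×ˢ Iio z.2) ∂π = ∫⁻ w, π (Iic w.1 ×ˢ Ioi w.2) ∂M := by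
  have hmeas : MeasurableSet {q : (ℝ × ℝ) × (ℝ × ℝ) | q.1.1 ≤ q.2.1 ∧ q.2.2 < q.1.2} :=
    (measurableSet_le measurable_fst.fst measurable_snd.fst).inter
      (measurableSet_lt measurable_snd.snd measurable_fst.snd)
  exact (Measure.prod_apply (ν := M) hmeas).symm.trans (Measure.prod_apply_symm (μ := π) hmeas)

lemma lintegral_measure_Ici_prod_Iio_quantileCoupling_le {π : Measure (ℝ × ℝ)} {μ ν : Measure ℝ}
    [IsProbabilityMeasure μ] [IsProbabilityMeasure ν] (h : IsCoupling π μ ν)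
    (M : Measure (ℝ × ℝ)) [SFinite M] :
    ∫⁻ z, M (Ici z.1 ×ˢ Iio z.2) ∂(quantileCoupling μ ν)
      ≤ ∫⁻ z, M (Ici z.1 ×ˢ Iio z.2) ∂π := by
  have := h.isProbabilityMeasure
  have := (isCoupling_quantileCoupling μ ν).isProbabilityMeasure
  rw [lintegral_measure_Ici_prod_Iio, lintegral_measure_Ici_prod_Iio]
  refine lintegral_mono fun w => ?_
  rw [quantileCoupling_Iic_prod_Ioi, ← compl_Iic]
  exact h.measure_sub_le measurableSet_Iic measurableSet_Iic

section ConvexCost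

lemma convexOn_comp_of_mapsTo {E : Type*} [AddCommGroup E] [Module ℝ E] {s : Set E} {t : Set ℝ}
    {f : E → ℝ} {g : ℝ → ℝ} (hg : ConvexOn ℝ t g) (hg_mono : MonotoneOn g t)
    (hf : ConvexOn ℝ s f) (hst : MapsTo f s t) : ConvexOn ℝ s fun x => g (f x) := by
  refine ⟨hf.1, fun x hx y hy a b ha hb hab => ?_⟩
  calc g (f (a • x + b • y)) ≤ g (a • f x + b • f y) :=
        hg_mono (hst (hf.1 hx hy ha hb hab)) (hg.1 (hst hx) (hst hy) ha hb hab)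
          (hf.2 hx hy ha hb hab)
    _ ≤ a • g (f x) + b • g (f y) := hg.2 (hst hx) (hst hy) ha hb hab

lemma exists_measure_Ici_prod_Iio_eq_lintegral (m : Measure ℝ) [SFinite m] :
    ∃ M : Measure (ℝ × ℝ), SFinite M ∧
      ∀ x y, M (Ici x ×ˢ Iio y) = ∫⁻ a in Iic (y - x), m (Iio a) := by
  refine ⟨(volume.prod m).map fun w => (w.1, w.1 + w.2), inferInstance, fun x y => ?_⟩
  have hmeas : MeasurableSet (Ici x ×ˢ Iio y) := measurableSet_Ici.prod measurableSet_Iio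
  have hslice (s : ℝ) : m (Prod.mk s ⁻¹' ((fun w : ℝ × ℝ => (w.1, w.1 + w.2)) ⁻¹'
      (Ici x ×ˢ Iio y))) = (Iic (y - x)).indicator (fun a => m (Iio a)) (y - s) := by
    by_cases hs : x ≤ s
    · rw [indicator_of_mem (mem_Iic.2 (sub_le_sub_left hs y))]
      congr 1
      ext r
      simp [hs, lt_sub_iff_add_lt']
    · have hys : y - s ∉ Iic (y - x) := fun h => hs (by linarith [mem_Iic.1 h])
      rw [indicator_of_notMem hys]
      simp [preimage, hs]
  rw [Measure.map_apply (by fun_prop) hmeas,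
    Measure.prod_apply (measurableSet_preimage (by fun_prop) hmeas), lintegral_congr hslice,
    lintegral_sub_left_eq_self, lintegral_indicator measurableSet_Iic]

lemma measure_Iio_stieltjesFunction_ae_eq {f : ℝ → ℝ} (hf : Monotone f) {l : ℝ}
    (hl : Tendsto f atBot (𝓝 l)) :
    ∀ᵐ x, hf.stieltjesFunction.measure (Iio x) = ENNReal.ofReal (f x - l) := by
  filter_upwards [hf.countable_not_continuousAt.ae_notMem volume] with x hx
  rw [StieltjesFunction.measure_Iio _ (tendsto_rightLim_atBot_of_tendsto hl)]
  have h : leftLim (rightLim f) x = f x := by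
    rw [leftLim_rightLim (hf.tendsto_leftLim x)]
    exact (not_not.1 hx).continuousWithinAt.leftLim_eq
  exact congrArg (fun y => ENNReal.ofReal (y - l)) h

variable {ψ : ℝ → ℝ} (hconv : ConvexOn ℝ univ ψ) (hmono : Monotone ψ)
include hconv

lemma monotone_rightDeriv : Monotone fun x => derivWithin ψ (Ioi x) x :=
  monotoneOn_univ.1 (by simpa using hconv.monotoneOn_rightDeriv)

lemma continuous_of_convexOn_univ : Continuous ψ := by
  simpa using hconv.continuousOn_interior

include hmono

lemma tendsto_rightDeriv_atBot {l : ℝ} (hl : Tendsto ψ atBot (𝓝 l)) :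
    Tendsto (fun x => derivWithin ψ (Ioi x) x) atBot (𝓝 0) := by
  have hdiff : Tendsto (fun x => ψ (x + 1) - ψ x) atBot (𝓝 0) := by
    simpa using (hl.comp (tendsto_atBot_add_const_right _ 1 tendsto_id)).sub hl
  refine squeeze_zero (fun x => (hmono.monotoneOn _).derivWithin_nonneg) (fun x => ?_) hdiff
  simpa [slope_def_field] using
    hconv.rightDeriv_le_slope_of_mem_interior (y := x + 1) (by simp) (mem_univ _) (lt_add_one x)

lemma lintegral_Ioc_rightDeriv {a b : ℝ} (hab : a ≤ b) :
    ∫⁻ x in Ioc a b, ENNReal.ofReal (derivWithin ψ (Ioi x) x) = ENNReal.ofReal (ψ b - ψ a) := by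
  have hint : IntervalIntegrable (fun x => derivWithin ψ (Ioi x) x) volume a b :=
    (monotone_rightDeriv hconv).intervalIntegrable
  rw [← intervalIntegral.integral_eq_sub_of_hasDeriv_right
      (continuous_of_convexOn_univ hconv).continuousOn
      (fun x _ => hconv.hasDerivWithinAt_rightDeriv_of_mem_interior (by simp)) hint,
    intervalIntegral.integral_of_le hab, ofReal_integral_eq_lintegral_ofReal hint.1]
  exact ae_of_all _ fun x => (hmono.monotoneOn _).derivWithin_nonneg

lemma lintegral_Iic_rightDeriv {l : ℝ} (hl : Tendsto ψ atBot (𝓝 l)) (b : ℝ) :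
    ∫⁻ x in Iic b, ENNReal.ofReal (derivWithin ψ (Ioi x) x) = ENNReal.ofReal (ψ b - l) := by
  refine (aecover_Ioi tendsto_id).lintegral_eq_of_tendsto _
    (monotone_rightDeriv hconv).measurable.ennreal_ofReal.aemeasurable
    ((ENNReal.tendsto_ofReal (hl.const_sub (ψ b))).congr' ?_)
  filter_upwards [eventually_le_atBot b] with a hab
  rw [Measure.restrict_restrict measurableSet_Ioi, id, Ioi_inter_Iic,
    lintegral_Ioc_rightDeriv hconv hmono hab]

end ConvexCost

/-- Convex increasing functions `ψ` on `ℝ` vanishing at `-∞`, used as transport costs `ψ (y - x)`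
or `ψ (x - y)` that are cheap in one of the two directions. -/
structure IsOneSidedConvexCost (ψ : ℝ → ℝ) : Prop where
  convexOn : ConvexOn ℝ univ ψ
  monotone : Monotone ψ
  tendsto_atBot : Tendsto ψ atBot (𝓝 0)

namespace IsOneSidedConvexCost

variable {ψ : ℝ → ℝ}

lemma nonneg (hψ : IsOneSidedConvexCost ψ) (t : ℝ) : 0 ≤ ψ t :=
  hψ.monotone.le_of_tendsto hψ.tendsto_atBot t

lemma measurable (hψ : IsOneSidedConvexCost ψ) : Measurable ψ :=
  hψ.monotone.measurable

lemma of_sub_const (hconv : ConvexOn ℝ univ ψ) (hmono : Monotone ψ) {l : ℝ}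
    (hl : Tendsto ψ atBot (𝓝 l)) : IsOneSidedConvexCost fun t => ψ t - l where
  convexOn := hconv.sub (concaveOn_const l convex_univ)
  monotone _ _ hxy := sub_le_sub_right (hmono hxy) l
  tendsto_atBot := by simpa using hl.sub_const l

lemma exists_measure_Ici_prod_Iio_eq (hψ : IsOneSidedConvexCost ψ) :
    ∃ M : Measure (ℝ × ℝ), SFinite M ∧
      ∀ x y, M (Ici x ×ˢ Iio y) = ENNReal.ofReal (ψ (y - x)) := by
  have hderiv := monotone_rightDeriv hψ.convexOn
  obtain ⟨M, hM, hM_eq⟩ := exists_measure_Ici_prod_Iio_eq_lintegral hderiv.stieltjesFunction.measure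
  refine ⟨M, hM, fun x y => ?_⟩
  rw [hM_eq, lintegral_congr_ae (ae_restrict_of_ae (measure_Iio_stieltjesFunction_ae_eq hderiv
    (tendsto_rightDeriv_atBot hψ.convexOn hψ.monotone hψ.tendsto_atBot)))]
  simpa using lintegral_Iic_rightDeriv hψ.convexOn hψ.monotone hψ.tendsto_atBot (y - x)

variable {π : Measure (ℝ × ℝ)} {μ ν : Measure ℝ} [IsProbabilityMeasure μ]
  [IsProbabilityMeasure ν]

lemma lintegral_snd_sub_fst_le (hψ : IsOneSidedConvexCost ψ) (h : IsCoupling π μ ν) :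
    ∫⁻ z, ENNReal.ofReal (ψ (z.2 - z.1)) ∂(quantileCoupling μ ν)
      ≤ ∫⁻ z, ENNReal.ofReal (ψ (z.2 - z.1)) ∂π := by
  obtain ⟨M, _, hM⟩ := hψ.exists_measure_Ici_prod_Iio_eq
  simpa only [hM] using lintegral_measure_Ici_prod_Iio_quantileCoupling_le h M

lemma lintegral_fst_sub_snd_le (hψ : IsOneSidedConvexCost ψ) (h : IsCoupling π μ ν) :
    ∫⁻ z, ENNReal.ofReal (ψ (z.1 - z.2)) ∂(quantileCoupling μ ν)
      ≤ ∫⁻ z, ENNReal.ofReal (ψ (z.1 - z.2)) ∂π := by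
  have hmeas : Measurable fun z : ℝ × ℝ => ENNReal.ofReal (ψ (z.2 - z.1)) :=
    (hψ.measurable.comp (by fun_prop)).ennreal_ofReal
  have hle := hψ.lintegral_snd_sub_fst_le h.swap
  rwa [← map_swap_quantileCoupling, lintegral_map hmeas measurable_swap,
    lintegral_map hmeas measurable_swap] at hle

end IsOneSidedConvexCost

section ConvexDecomposition

variable {φ : ℝ → ℝ}

lemma monotoneOn_inter_Ici_of_isMinOn {s : Set ℝ} (hφ : ConvexOn ℝ s φ) {a : ℝ} (has : a ∈ s)
    (ha : IsMinOn φ s a) : MonotoneOn φ (s ∩ Ici a) := by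
  rintro x ⟨hxs, hax⟩ y ⟨hys, _⟩ hxy
  rcases (mem_Ici.1 hax).eq_or_lt with rfl | hax
  · exact ha hys
  rcases hxy.eq_or_lt with rfl | hxy
  · rfl
  exact hφ.le_right_of_left_le'' has hys hax hxy.le (ha hxs)

variable (hφ : ConvexOn ℝ univ φ)
include hφ

lemma isOneSidedConvexCost_comp_max_sub {a : ℝ} (ha : IsMinOn φ univ a) :
    IsOneSidedConvexCost fun t => φ (max t a) - φ a := by
  have hmono : MonotoneOn φ (Ici a) := by
    simpa only [univ_inter] using monotoneOn_inter_Ici_of_isMinOn hφ (mem_univ a) ha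
  refine .of_sub_const ?_ (fun x y hxy => hmono (le_max_right x a) (le_max_right y a)
    (max_le_max_right a hxy)) ?_
  · exact convexOn_comp_of_mapsTo (hφ.subset (subset_univ _) (convex_Ici a)) hmono
      ((convexOn_id convex_univ).sup (convexOn_const a convex_univ)) fun t _ => le_max_right t a
  · refine tendsto_const_nhds.congr' ?_
    filter_upwards [eventually_le_atBot a] with t ht
    rw [max_eq_right ht]

lemma exists_isMinOn_of_not_monotone_of_not_antitone (hmono : ¬Monotone φ)
    (hanti : ¬Antitone φ) : ∃ a, IsMinOn φ univ a := by
  obtain ⟨x, y, hxy, hlt⟩ : ∃ x y, x < y ∧ φ x < φ y := by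
    simp only [Antitone, not_forall, not_le] at hanti
    obtain ⟨x, y, hxy, hlt⟩ := hanti
    exact ⟨x, y, hxy.lt_of_ne (by rintro rfl; exact hlt.false), hlt⟩
  obtain ⟨x', y', hxy', hlt'⟩ : ∃ x y, x < y ∧ φ y < φ x := by
    simp only [Monotone, not_forall, not_le] at hmono
    obtain ⟨x, y, hxy, hlt⟩ := hmono
    exact ⟨x, y, hxy.lt_of_ne (by rintro rfl; exact hlt.false), hlt⟩
  have hright : ∀ᶠ z in atTop, φ x ≤ φ z := by
    filter_upwards [eventually_ge_atTop y] with z hz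
    exact hlt.le.trans (hφ.le_right_of_left_le'' (mem_univ x) (mem_univ z) hxy hz hlt.le)
  have hleft : ∀ᶠ z in atBot, φ y' ≤ φ z := by
    filter_upwards [eventually_le_atBot x'] with z hz
    exact hlt'.le.trans (hφ.le_left_of_right_le'' (mem_univ z) (mem_univ y') hz hxy' hlt'.le)
  obtain ⟨c, hc⟩ : ∃ c, ∀ᶠ z in cocompact ℝ, φ c ≤ φ z := by
    simp only [cocompact_eq_atBot_atTop, eventually_sup]
    rcases le_total (φ x) (φ y') with h | h
    · exact ⟨x, hleft.mono fun _ => h.trans, hright⟩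
    · exact ⟨y', hleft, hright.mono fun _ => h.trans⟩
  obtain ⟨a, ha⟩ := (continuous_of_convexOn_univ hφ).exists_forall_le' c hc
  exact ⟨a, fun z _ => ha z⟩

lemma exists_eq_add_isOneSidedConvexCost (hφ_nonneg : ∀ t, 0 ≤ φ t) :
    ∃ (c : ℝ) (ψ₁ ψ₂ : ℝ → ℝ), 0 ≤ c ∧ IsOneSidedConvexCost ψ₁ ∧ IsOneSidedConvexCost ψ₂ ∧
      ∀ t, φ t = c + (ψ₁ t + ψ₂ (-t)) := by
  have hneg : ConvexOn ℝ univ fun t => φ (-t) := by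
    simpa [Function.comp_def] using hφ.comp_linearMap (-LinearMap.id)
  have hzero : IsOneSidedConvexCost fun _ => 0 :=
    ⟨convexOn_const 0 convex_univ, monotone_const, tendsto_const_nhds⟩
  by_cases hmono : Monotone φ
  · have hlim := tendsto_atBot_ciInf hmono ⟨0, forall_mem_range.2 hφ_nonneg⟩
    exact ⟨⨅ t, φ t, _, _, Real.iInf_nonneg hφ_nonneg, .of_sub_const hφ hmono hlim, hzero,
      fun t => by ring⟩
  by_cases hanti : Antitone φ
  · have hmono_neg : Monotone fun t => φ (-t) := fun _ _ hxy => hanti (neg_le_neg hxy)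
    have hlim := tendsto_atBot_ciInf hmono_neg ⟨0, forall_mem_range.2 fun t => hφ_nonneg (-t)⟩
    exact ⟨⨅ t, φ (-t), _, _, Real.iInf_nonneg fun t => hφ_nonneg (-t), hzero,
      .of_sub_const hneg hmono_neg hlim, fun t => by simp⟩
  obtain ⟨a, ha⟩ := exists_isMinOn_of_not_monotone_of_not_antitone hφ hmono hanti
  have ha_neg : IsMinOn (fun t => φ (-t)) univ (-a) := fun t _ => by
    simpa using ha (mem_univ (-t))
  refine ⟨φ a, _, _, hφ_nonneg a, isOneSidedConvexCost_comp_max_sub hφ ha,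
    isOneSidedConvexCost_comp_max_sub hneg ha_neg, fun t => ?_⟩
  rcases le_total a t with hat | hat
  · simp [max_eq_left hat, max_eq_right (neg_le_neg hat)]
  · simp [max_eq_right hat, max_eq_left (neg_le_neg hat)]

end ConvexDecomposition

lemma lintegral_convex_quantileCoupling_le {φ : ℝ → ℝ} (hφ : ConvexOn ℝ univ φ)
    (hφ_nonneg : ∀ t, 0 ≤ φ t) {π : Measure (ℝ × ℝ)} {μ ν : Measure ℝ} [IsProbabilityMeasure μ]
    [IsProbabilityMeasure ν] (h : IsCoupling π μ ν) :
    ∫⁻ z, ENNReal.ofReal (φ (z.1 - z.2)) ∂(quantileCoupling μ ν)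
      ≤ ∫⁻ z, ENNReal.ofReal (φ (z.1 - z.2)) ∂π := by
  obtain ⟨c, ψ₁, ψ₂, hc, hψ₁, hψ₂, hsum⟩ := exists_eq_add_isOneSidedConvexCost hφ hφ_nonneg
  have hsplit (ρ : Measure (ℝ × ℝ)) [IsProbabilityMeasure ρ] :
      ∫⁻ z, ENNReal.ofReal (φ (z.1 - z.2)) ∂ρ = ENNReal.ofReal c +
        (∫⁻ z, ENNReal.ofReal (ψ₁ (z.1 - z.2)) ∂ρ +
          ∫⁻ z, ENNReal.ofReal (ψ₂ (z.2 - z.1)) ∂ρ) := by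
    have hmeas : Measurable fun z : ℝ × ℝ => ENNReal.ofReal (ψ₁ (z.1 - z.2)) :=
      (hψ₁.measurable.comp (by fun_prop)).ennreal_ofReal
    simp_rw [hsum, neg_sub, ENNReal.ofReal_add hc (add_nonneg (hψ₁.nonneg _) (hψ₂.nonneg _)),
      ENNReal.ofReal_add (hψ₁.nonneg _) (hψ₂.nonneg _)]
    rw [lintegral_add_left measurable_const, lintegral_add_left hmeas]
    simp
  have := h.isProbabilityMeasure
  have := (isCoupling_quantileCoupling μ ν).isProbabilityMeasure
  rw [hsplit, hsplit]
  exact add_le_add_right (add_le_add (hψ₁.lintegral_fst_sub_snd_le h)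
    (hψ₂.lintegral_snd_sub_fst_le h)) _

lemma convexOn_abs_rpow {p : ℝ} (hp : 1 ≤ p) : ConvexOn ℝ univ fun x : ℝ => |x| ^ p := by
  refine convexOn_comp_of_mapsTo (convexOn_rpow hp) (fun x hx y _ hxy => ?_)
    (convexOn_norm convex_univ) fun x _ => abs_nonneg x
  exact Real.rpow_le_rpow hx hxy (zero_le_one.trans hp)

theorem wasserstein_eq_integral_quantile_general {φ : ℝ → ℝ}
    (hφ : ConvexOn ℝ univ φ) (hφ_nonneg : ∀ t, 0 ≤ φ t) (μ ν : Measure ℝ)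
    [IsProbabilityMeasure μ] [IsProbabilityMeasure ν] (F G : ℝ → ℝ)
    (hF : ∀ x, F x = (μ (Iic x)).toReal) (hG : ∀ x, G x = (ν (Iic x)).toReal) :
    ⨅ π ∈ {π : Measure (ℝ × ℝ) | IsCoupling π μ ν}, ∫⁻ z, ENNReal.ofReal (φ (z.1 - z.2)) ∂π
      = ∫⁻ u in Ioo (0 : ℝ) 1, ENNReal.ofReal (φ (qinv F u - qinv G u)) := by
  obtain rfl : F = cdf μ := funext fun x => (hF x).trans (cdf_eq_real μ x).symm
  obtain rfl : G = cdf ν := funext fun x => (hG x).trans (cdf_eq_real ν x).symm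
  have hmeas : Measurable fun z : ℝ × ℝ => ENNReal.ofReal (φ (z.1 - z.2)) :=
    ((continuous_of_convexOn_univ hφ).measurable.comp (by fun_prop)).ennreal_ofReal
  rw [← lintegral_quantileCoupling μ ν hmeas]
  exact le_antisymm (iInf₂_le (quantileCoupling μ ν) (isCoupling_quantileCoupling μ ν))
    (le_iInf₂ fun _ h => lintegral_convex_quantileCoupling_le hφ hφ_nonneg h)

/-- for probability measures on ℝ with finite `p`-th moments with distribution
functions `F` and `G`, `W_p(μ,ν)^p = ∫₀¹ |F⁻¹(u) - G⁻¹(u)|^p du`. -/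
theorem wasserstein_eq_integral_quantile (p : ℝ) (hp : 1 ≤ p)
    (μ ν : MeasureTheory.Measure ℝ) [IsProbabilityMeasure μ] [IsProbabilityMeasure ν]
    (hμ : ∫⁻ x, ENNReal.ofReal (|x| ^ p) ∂μ ≠ ⊤)
    (hν : ∫⁻ x, ENNReal.ofReal (|x| ^ p) ∂ν ≠ ⊤)
    (F G : ℝ → ℝ)
    (hF : ∀ x, F x = (μ (Iic x)).toReal)
    (hG : ∀ x, G x = (ν (Iic x)).toReal) :
    WpPow p μ ν
      = ∫⁻ u in Ioo (0:ℝ) 1, ENNReal.ofReal (|qinv F u - qinv G u| ^ p) :=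
  wasserstein_eq_integral_quantile_general (convexOn_abs_rpow hp) (fun _ => by positivity)
    μ ν F G hF hG
end

section
/- Let X and Y be integrable real random variables on a probability space with distribution functions F and G and joint distribution function H(x,y) = P(X ≤ x, Y ≤ y). Then E|X − Y| = ∫_ℝ [F(y) + G(y) − 2H(y,y)] dy. -/
open MeasureTheory ENNReal Set

/-!
The identity is Tonelli's theorem for the region of `ℝ × Ω` between the graphs of `X` and `Y`, that
is, for the symmetric difference of the epigraphs `{(y, ω) | X ω ≤ y}` and `{(y, ω) | Y ω ≤ y}`. Its
section over `ω` is a half-open interval of length `|X ω - Y ω|`, while its section at height `y` is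
the symmetric difference of the events `{X ≤ y}` and `{Y ≤ y}`, of probability
`F y + G y - 2 * H y y`.
-/

open scoped symmDiff

section Prod

variable {α β : Type*} [MeasurableSpace α] [MeasurableSpace β] {μ : Measure α} {ν : Measure β}
  [SFinite ν] {s : Set (α × β)}

theorem measure_prodMk_left_ae_eq_of_ae_eq {t : Set (α × β)} (h : s =ᵐ[μ.prod ν] t) :
    (fun x ↦ ν (Prod.mk x ⁻¹' s)) =ᵐ[μ] fun x ↦ ν (Prod.mk x ⁻¹' t) :=
  (Measure.ae_ae_of_ae_prod h).mono fun _ hx ↦ measure_congr hx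

theorem aemeasurable_measure_prodMk_left (hs : NullMeasurableSet s (μ.prod ν)) :
    AEMeasurable (fun x ↦ ν (Prod.mk x ⁻¹' s)) μ := by
  obtain ⟨t, ht, hst⟩ := hs
  exact ⟨_, measurable_measure_prodMk_left ht, measure_prodMk_left_ae_eq_of_ae_eq hst⟩

theorem measure_prod_apply₀ (hs : NullMeasurableSet s (μ.prod ν)) :
    μ.prod ν s = ∫⁻ x, ν (Prod.mk x ⁻¹' s) ∂μ := by
  obtain ⟨t, ht, hst⟩ := hs
  rw [measure_congr hst, Measure.prod_apply ht,
    lintegral_congr_ae (measure_prodMk_left_ae_eq_of_ae_eq hst)]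

theorem measure_prod_apply_symm₀ [SFinite μ] (hs : NullMeasurableSet s (μ.prod ν)) :
    μ.prod ν s = ∫⁻ y, μ ((fun x ↦ (x, y)) ⁻¹' s) ∂ν := by
  have hswap : MeasurePreserving Prod.swap (ν.prod μ) (μ.prod ν) := Measure.measurePreserving_swap
  rw [← hswap.measure_preimage hs,
    measure_prod_apply₀ (hs.preimage hswap.quasiMeasurePreserving)]
  rfl

end Prod

theorem Ici_symmDiff_Ici {α : Type*} [LinearOrder α] (a b : α) :
    Ici a ∆ Ici b = Ico (min a b) (max a b) := by
  ext x
  simp only [mem_symmDiff, mem_Ici, mem_Ico, min_le_iff, lt_max_iff]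
  grind

theorem volume_Ici_symmDiff_Ici (a b : ℝ) : volume (Ici a ∆ Ici b) = ‖a - b‖ₑ := by
  rw [Ici_symmDiff_Ici, Real.volume_Ico, max_sub_min_eq_abs', Real.enorm_eq_ofReal_abs]

theorem measureReal_symmDiff_eq_add_sub {α : Type*} [MeasurableSpace α] {μ : Measure α}
    {s t : Set α} (hs : NullMeasurableSet s μ) (ht : NullMeasurableSet t μ)
    (hμs : μ s ≠ ∞) (hμt : μ t ≠ ∞) :
    μ.real (s ∆ t) = μ.real s + μ.real t - 2 * μ.real (s ∩ t) := by
  have hunion : μ.real (s ∆ t) = μ.real (s \ t) + μ.real (t \ s) :=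
    measureReal_union₀ (ht.diff hs) disjoint_sdiff_sdiff.aedisjoint
      (measure_ne_top_of_subset sdiff_subset hμs) (measure_ne_top_of_subset sdiff_subset hμt)
  have hs_split := measureReal_inter_add_sdiff₀ ht hμs
  have ht_split := measureReal_inter_add_sdiff₀ hs hμt
  rw [inter_comm] at ht_split
  linarith

section Epigraph

variable {Ω : Type*} [MeasurableSpace Ω] {μ : Measure Ω} {X Y : Ω → ℝ}

theorem nullMeasurableSet_symmDiff_epigraph (hX : AEMeasurable X μ) (hY : AEMeasurable Y μ) :
    NullMeasurableSet ({p : ℝ × Ω | X p.2 ≤ p.1} ∆ {p | Y p.2 ≤ p.1}) (volume.prod μ) :=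
  (nullMeasurableSet_le hX.comp_snd measurable_fst.aemeasurable).symmDiff
    (nullMeasurableSet_le hY.comp_snd measurable_fst.aemeasurable)

variable [SFinite μ]

theorem lintegral_enorm_sub_eq_lintegral_measure_symmDiff
    (hX : AEMeasurable X μ) (hY : AEMeasurable Y μ) :
    ∫⁻ ω, ‖X ω - Y ω‖ₑ ∂μ = ∫⁻ y : ℝ, μ ({ω | X ω ≤ y} ∆ {ω | Y ω ≤ y}) := by
  have hS := nullMeasurableSet_symmDiff_epigraph hX hY
  calc ∫⁻ ω, ‖X ω - Y ω‖ₑ ∂μ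
      = ∫⁻ ω, volume (Ici (X ω) ∆ Ici (Y ω)) ∂μ := by simp only [volume_Ici_symmDiff_Ici]
    _ = volume.prod μ ({p : ℝ × Ω | X p.2 ≤ p.1} ∆ {p | Y p.2 ≤ p.1}) :=
        (measure_prod_apply_symm₀ hS).symm
    _ = ∫⁻ y : ℝ, μ ({ω | X ω ≤ y} ∆ {ω | Y ω ≤ y}) := measure_prod_apply₀ hS

theorem integral_abs_sub_eq_integral_measureReal_symmDiff
    (hX : AEMeasurable X μ) (hY : AEMeasurable Y μ) (hXY : Integrable (fun ω ↦ X ω - Y ω) μ) :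
    ∫ ω, |X ω - Y ω| ∂μ = ∫ y : ℝ, μ.real ({ω | X ω ≤ y} ∆ {ω | Y ω ≤ y}) := by
  have hlintegral := lintegral_enorm_sub_eq_lintegral_measure_symmDiff hX hY
  have hmeas : AEMeasurable (fun y : ℝ ↦ μ ({ω | X ω ≤ y} ∆ {ω | Y ω ≤ y})) :=
    aemeasurable_measure_prodMk_left (nullMeasurableSet_symmDiff_epigraph hX hY)
  have hfinite : ∀ᵐ y : ℝ, μ ({ω | X ω ≤ y} ∆ {ω | Y ω ≤ y}) < ∞ :=
    ae_lt_top' hmeas (hlintegral ▸ hXY.hasFiniteIntegral.ne)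
  calc ∫ ω, |X ω - Y ω| ∂μ
      = (∫⁻ ω, ‖X ω - Y ω‖ₑ ∂μ).toReal :=
        integral_norm_eq_lintegral_enorm hXY.aestronglyMeasurable
    _ = (∫⁻ y : ℝ, μ ({ω | X ω ≤ y} ∆ {ω | Y ω ≤ y})).toReal := by rw [hlintegral]
    _ = ∫ y : ℝ, μ.real ({ω | X ω ≤ y} ∆ {ω | Y ω ≤ y}) := (integral_toReal hmeas hfinite).symm

end Epigraph

theorem expectation_abs_sub_eq_integral_cdf_general
    {Ω : Type*} [MeasurableSpace Ω] {μ : Measure Ω} [IsFiniteMeasure μ] {X Y : Ω → ℝ}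
    (hX : AEMeasurable X μ) (hY : AEMeasurable Y μ) (hXY : Integrable (fun ω ↦ X ω - Y ω) μ)
    {F G : ℝ → ℝ} {H : ℝ → ℝ → ℝ}
    (hF : ∀ x, F x = μ.real {ω | X ω ≤ x}) (hG : ∀ y, G y = μ.real {ω | Y ω ≤ y})
    (hH : ∀ x y, H x y = μ.real {ω | X ω ≤ x ∧ Y ω ≤ y}) :
    ∫ ω, |X ω - Y ω| ∂μ = ∫ y : ℝ, (F y + G y - 2 * H y y) := by
  rw [integral_abs_sub_eq_integral_measureReal_symmDiff hX hY hXY]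
  refine integral_congr_ae (.of_forall fun y ↦ ?_)
  simp only [hF, hG, hH]
  exact measureReal_symmDiff_eq_add_sub (nullMeasurableSet_le hX aemeasurable_const)
    (nullMeasurableSet_le hY aemeasurable_const) (measure_ne_top μ _) (measure_ne_top μ _)

/-- for integrable random variables `X, Y` with distribution functions
`F`, `G` and joint distribution function `H`,
`E|X - Y| = ∫_ℝ [F(y) + G(y) - 2 H(y,y)] dy`. -/
theorem expectation_abs_sub_eq_integral_cdf
    {Ω : Type*} [MeasurableSpace Ω] (P : MeasureTheory.Measure Ω) [IsProbabilityMeasure P]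
    (X Y : Ω → ℝ) (hX : Measurable X) (hY : Measurable Y)
    (hXint : Integrable X P) (hYint : Integrable Y P)
    (F G : ℝ → ℝ) (H : ℝ → ℝ → ℝ)
    (hF : ∀ x, F x = (P {ω | X ω ≤ x}).toReal)
    (hG : ∀ y, G y = (P {ω | Y ω ≤ y}).toReal)
    (hH : ∀ x y, H x y = (P {ω | X ω ≤ x ∧ Y ω ≤ y}).toReal) :
    ∫ ω, |X ω - Y ω| ∂P = ∫ y : ℝ, (F y + G y - 2 * H y y) :=
  expectation_abs_sub_eq_integral_cdf_general hX.aemeasurable hY.aemeasurable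
    (hXint.sub hYint) hF hG hH
end

section
/- Let X, Y be real random variables with distribution functions F and G and joint distribution function H(x,y) = P(X ≤ x, Y ≤ y). Then the pair (X,Y) is comonotonic if and only if H(x,y) = min{F(x), G(y)} for all (x,y) ∈ ℝ². -/
/-!
`H(x, y) = min (F x) (G y)` holds exactly when one of the events `X ≤ x, Y > y` and `X > x, Y ≤ y`
is null. This is so for `(f(Z), g(Z))`, because `f ≤ x` and `g ≤ y` define lower sets of `ℝ`, and
two lower sets of `ℝ` are nested.

Conversely, if one of the two events is always null, then no two points of the support of the law
of `(X, Y)` are strictly oppositely ordered, so the support is a chain in `ℝ²`. In the rotated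
coordinates `t = x + y`, `u = x - y`, a chain lies on the graph of a `1`-Lipschitz function `h`
defined on all of `ℝ`. Both `(t + h t) / 2` and `(t - h t) / 2` are nondecreasing in `t`, and at
`t = X + Y` they recover `X` and `Y`.
-/

open MeasureTheory ENNReal Set

/-- A pair `(X, Y)` of real random variables is comonotonic if it has the same joint
distribution as `(f(Z), g(Z))` for some random variable `Z` and nondecreasing `f, g`. -/
def Comonotonic {Ω : Type*} [MeasurableSpace Ω] (P : MeasureTheory.Measure Ω)
    (X Y : Ω → ℝ) : Prop :=
  ∃ (Z : Ω → ℝ) (f g : ℝ → ℝ), Measurable Z ∧ Monotone f ∧ Monotone g ∧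
    P.map (fun ω => (X ω, Y ω)) = P.map (fun ω => (f (Z ω), g (Z ω)))

section Null

variable {Ω : Type*} [MeasurableSpace Ω] {P : Measure Ω}

lemma measureReal_inter_eq_min_iff [IsFiniteMeasure P] {s t : Set Ω}
    (hs : NullMeasurableSet s P) (ht : NullMeasurableSet t P) :
    P.real (s ∩ t) = min (P.real s) (P.real t) ↔ P (s \ t) = 0 ∨ P (t \ s) = 0 := by
  have hs_split : P.real (s ∩ t) + P.real (s \ t) = P.real s := measureReal_inter_add_sdiff₀ ht
  have ht_split : P.real (s ∩ t) + P.real (t \ s) = P.real t := by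
    rw [inter_comm, measureReal_inter_add_sdiff₀ hs]
  rw [← hs_split, ← ht_split, min_add_add_left, left_eq_add, ← measureReal_eq_zero_iff,
    ← measureReal_eq_zero_iff, min_eq_iff]
  have hst_nonneg : 0 ≤ P.real (s \ t) := measureReal_nonneg
  have hts_nonneg : 0 ≤ P.real (t \ s) := measureReal_nonneg
  grind

lemma measureReal_le_and_le_eq_min_iff [IsFiniteMeasure P] {α β : Type*}
    [LinearOrder α] [TopologicalSpace α] [OrderClosedTopology α] [MeasurableSpace α]
    [OpensMeasurableSpace α]
    [LinearOrder β] [TopologicalSpace β] [OrderClosedTopology β] [MeasurableSpace β]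
    [OpensMeasurableSpace β]
    {X : Ω → α} {Y : Ω → β} (hX : AEMeasurable X P) (hY : AEMeasurable Y P) (x : α) (y : β) :
    P.real {ω | X ω ≤ x ∧ Y ω ≤ y} = min (P.real {ω | X ω ≤ x}) (P.real {ω | Y ω ≤ y}) ↔
      P.map (fun ω ↦ (X ω, Y ω)) (Iic x ×ˢ Ioi y) = 0 ∨
        P.map (fun ω ↦ (X ω, Y ω)) (Ioi x ×ˢ Iic y) = 0 := by
  have hsdiff : {ω | X ω ≤ x} \ {ω | Y ω ≤ y} = (fun ω ↦ (X ω, Y ω)) ⁻¹' (Iic x ×ˢ Ioi y) := by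
    ext ω; simp
  have hsdiff' : {ω | Y ω ≤ y} \ {ω | X ω ≤ x} = (fun ω ↦ (X ω, Y ω)) ⁻¹' (Ioi x ×ˢ Iic y) := by
    ext ω; simp [and_comm]
  rw [Measure.map_apply_of_aemeasurable (hX.prodMk hY) (measurableSet_Iic.prod measurableSet_Ioi),
    Measure.map_apply_of_aemeasurable (hX.prodMk hY) (measurableSet_Ioi.prod measurableSet_Iic),
    ← hsdiff, ← hsdiff']
  exact measureReal_inter_eq_min_iff (hX.nullMeasurableSet_preimage measurableSet_Iic)
    (hY.nullMeasurableSet_preimage measurableSet_Iic)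

end Null

lemma isChain_support_of_prod_eq_zero {α β : Type*}
    [LinearOrder α] [DenselyOrdered α] [TopologicalSpace α] [OrderTopology α] [MeasurableSpace α]
    [LinearOrder β] [DenselyOrdered β] [TopologicalSpace β] [OrderTopology β] [MeasurableSpace β]
    {μ : Measure (α × β)}
    (hμ : ∀ x y, μ (Iic x ×ˢ Ioi y) = 0 ∨ μ (Ioi x ×ˢ Iic y) = 0) :
    IsChain (· ≤ ·) μ.support := by
  have not_crossing : ∀ p ∈ μ.support, ∀ q ∈ μ.support, p.1 < q.1 → p.2 ≤ q.2 := by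
    intro p hp q hq hfst
    by_contra! hsnd
    obtain ⟨x, hpx, hxq⟩ := exists_between hfst
    obtain ⟨y, hqy, hyp⟩ := exists_between hsnd
    rw [Measure.mem_support_iff_forall] at hp hq
    rcases hμ x y with hnull | hnull
    · exact (hp _ (prod_mem_nhds (Iic_mem_nhds hpx) (Ioi_mem_nhds hyp))).ne' hnull
    · exact (hq _ (prod_mem_nhds (Ioi_mem_nhds hxq) (Iic_mem_nhds hqy))).ne' hnull
  intro p hp q hq _
  rcases lt_trichotomy p.1 q.1 with hlt | heq | hgt
  · exact .inl ⟨hlt.le, not_crossing p hp q hq hlt⟩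
  · exact (le_total p.2 q.2).imp (⟨heq.le, ·⟩) (⟨heq.ge, ·⟩)
  · exact .inr ⟨hgt.le, not_crossing q hq p hp hgt⟩

section Chain

variable {S : Set (ℝ × ℝ)}

lemma dist_sub_le_dist_add_of_isChain (hS : IsChain (· ≤ ·) S) {p q : ℝ × ℝ} (hp : p ∈ S)
    (hq : q ∈ S) : dist (p.1 - p.2) (q.1 - q.2) ≤ dist (p.1 + p.2) (q.1 + q.2) := by
  rw [Real.dist_eq, Real.dist_eq]
  rcases hS.total hp hq with ⟨hfst, hsnd⟩ | ⟨hfst, hsnd⟩ <;> grind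

lemma exists_lipschitzWith_sub_eq_of_isChain (hS : IsChain (· ≤ ·) S) :
    ∃ h : ℝ → ℝ, LipschitzWith 1 h ∧ ∀ p ∈ S, h (p.1 + p.2) = p.1 - p.2 := by
  have sum_injOn : InjOn (fun p : ℝ × ℝ ↦ p.1 + p.2) S := by
    intro p hp q hq (hsum : p.1 + p.2 = q.1 + q.2)
    have hdiff := dist_sub_le_dist_add_of_isChain hS hp hq
    rw [hsum, dist_self, dist_le_zero] at hdiff
    ext <;> linarith
  let point : ℝ → ℝ × ℝ := Function.invFunOn (fun p ↦ p.1 + p.2) S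
  have point_sum : ∀ p ∈ S, point (p.1 + p.2) = p := sum_injOn.leftInvOn_invFunOn
  have lipschitzOn : LipschitzOnWith 1 (fun t ↦ (point t).1 - (point t).2)
      ((fun p : ℝ × ℝ ↦ p.1 + p.2) '' S) := by
    refine LipschitzOnWith.of_dist_le_mul ?_
    rintro _ ⟨p, hp, rfl⟩ _ ⟨q, hq, rfl⟩
    simpa only [NNReal.coe_one, one_mul, point_sum p hp, point_sum q hq]
      using dist_sub_le_dist_add_of_isChain hS hp hq
  obtain ⟨h, hLip, heq⟩ := lipschitzOn.extend_real
  refine ⟨h, hLip, fun p hp ↦ ?_⟩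
  simp only [← heq ⟨p, hp, rfl⟩, point_sum p hp]

lemma monotone_id_add_of_lipschitzWith_one {h : ℝ → ℝ} (hLip : LipschitzWith 1 h) :
    Monotone fun t ↦ t + h t := by
  intro s t hst
  have hdist := hLip.dist_le_mul s t
  rw [NNReal.coe_one, one_mul, Real.dist_eq, Real.dist_eq] at hdist
  grind

lemma exists_monotone_eq_of_isChain (hS : IsChain (· ≤ ·) S) :
    ∃ f g : ℝ → ℝ, Monotone f ∧ Monotone g ∧
      ∀ p ∈ S, (f (p.1 + p.2), g (p.1 + p.2)) = p := by
  obtain ⟨h, hLip, heq⟩ := exists_lipschitzWith_sub_eq_of_isChain hS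
  refine ⟨fun t ↦ (t + h t) / 2, fun t ↦ (t + -h t) / 2,
    (monotone_id_add_of_lipschitzWith_one hLip).div_const zero_le_two,
    (monotone_id_add_of_lipschitzWith_one hLip.neg).div_const zero_le_two, fun p hp ↦ ?_⟩
  ext <;> simp only [heq p hp] <;> ring

end Chain

section Comonotonic

variable {Ω : Type*} [MeasurableSpace Ω] {P : Measure Ω} {X Y : Ω → ℝ}

lemma Comonotonic.map_Iic_prod_Ioi_eq_zero_or (hXY : Comonotonic P X Y) (x y : ℝ) :
    P.map (fun ω ↦ (X ω, Y ω)) (Iic x ×ˢ Ioi y) = 0 ∨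
      P.map (fun ω ↦ (X ω, Y ω)) (Ioi x ×ˢ Iic y) = 0 := by
  obtain ⟨Z, f, g, hZ, hf, hg, hlaw⟩ := hXY
  have hfg : Measurable fun ω ↦ (f (Z ω), g (Z ω)) :=
    (hf.measurable.comp hZ).prodMk (hg.measurable.comp hZ)
  have hf_lower : IsLowerSet (f ⁻¹' Iic x) := (isLowerSet_Iic x).preimage hf
  have hg_lower : IsLowerSet (g ⁻¹' Iic y) := (isLowerSet_Iic y).preimage hg
  rw [hlaw, Measure.map_apply hfg (measurableSet_Iic.prod measurableSet_Ioi),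
    Measure.map_apply hfg (measurableSet_Ioi.prod measurableSet_Iic)]
  refine (hf_lower.total hg_lower).imp (fun hsub ↦ ?_) (fun hsub ↦ ?_)
  · refine measure_mono_null (fun ω ⟨hfx, hgy⟩ ↦ ?_) measure_empty
    exact not_lt_of_ge (show g (Z ω) ≤ y from hsub hfx) hgy
  · refine measure_mono_null (fun ω ⟨hfx, hgy⟩ ↦ ?_) measure_empty
    exact not_lt_of_ge (show f (Z ω) ≤ x from hsub hgy) hfx

lemma comonotonic_of_isChain_support (hX : AEMeasurable X P) (hY : AEMeasurable Y P)
    (hchain : IsChain (· ≤ ·) (P.map fun ω ↦ (X ω, Y ω)).support) : Comonotonic P X Y := by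
  obtain ⟨f, g, hf, hg, hfg⟩ := exists_monotone_eq_of_isChain hchain
  have hsum : AEMeasurable (fun ω ↦ X ω + Y ω) P := hX.add hY
  have hsupp : ∀ᵐ ω ∂P, (X ω, Y ω) ∈ (P.map fun ω ↦ (X ω, Y ω)).support :=
    ae_of_ae_map (hX.prodMk hY) Measure.support_mem_ae
  refine ⟨hsum.mk, f, g, hsum.measurable_mk, hf, hg, Measure.map_congr ?_⟩
  filter_upwards [hsupp, hsum.ae_eq_mk] with ω hω hmk
  rw [← hmk]
  exact (hfg _ hω).symm

theorem comonotonic_iff_joint_cdf_eq_min_general [IsFiniteMeasure P]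
    (hX : AEMeasurable X P) (hY : AEMeasurable Y P) :
    Comonotonic P X Y ↔ ∀ x y : ℝ,
      P.real {ω | X ω ≤ x ∧ Y ω ≤ y} = min (P.real {ω | X ω ≤ x}) (P.real {ω | Y ω ≤ y}) := by
  simp only [measureReal_le_and_le_eq_min_iff hX hY]
  exact ⟨Comonotonic.map_Iic_prod_Ioi_eq_zero_or, fun hnull ↦
    comonotonic_of_isChain_support hX hY (isChain_support_of_prod_eq_zero hnull)⟩

end Comonotonic

/-- `(X,Y)` is comonotonic iff the joint distribution function equals
the Fréchet–Hoeffding upper bound: `H(x,y) = min {F(x), G(y)}` for all `x, y`. -/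
theorem comonotonic_iff_joint_cdf_eq_min {Ω : Type*} [MeasurableSpace Ω]
    (P : MeasureTheory.Measure Ω) [IsProbabilityMeasure P]
    (X Y : Ω → ℝ) (hX : Measurable X) (hY : Measurable Y)
    (F G : ℝ → ℝ) (H : ℝ → ℝ → ℝ)
    (hF : ∀ x, F x = (P {ω | X ω ≤ x}).toReal)
    (hG : ∀ y, G y = (P {ω | Y ω ≤ y}).toReal)
    (hH : ∀ x y, H x y = (P {ω | X ω ≤ x ∧ Y ω ≤ y}).toReal) :
    Comonotonic P X Y ↔ ∀ x y : ℝ, H x y = min (F x) (G y) := by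
  simp only [hF, hG, hH]
  exact comonotonic_iff_joint_cdf_eq_min_general hX.aemeasurable hY.aemeasurable
end
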